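/- arXiv:2110.15470 — 6 statements merged into one kernel-verified Lean document; each statement's English description precedes it below -/
import Mathlib

section
/- Let f : ℝ^d → ℝ be differentiable and L > 0. Then f is L-smooth if and only if f(λx + (1−λ)y) ≥ λ f(x) + (1−λ) f(y) − (L/2) λ(1−λ) ‖x−y‖² for all x, y ∈ ℝ^d and all λ ∈ [0,1]. -/
/-!
If `f` is `L`-smooth, apply the quadratic upper bound at the base point `z = λx + (1-λ)y` towards
both `x` and `y` and average with weights `λ` and `1-λ`: the gradient terms cancel because
`λ(x-z) + (1-λ)(y-z) = 0`, and the quadratic terms add up to `λ(1-λ)‖x-y‖²`.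
Conversely, the combination inequality bounds the difference quotients
`(f(x + t(y-x)) - f x) / t` below by `f y - f x - (L/2)‖y-x‖²` for small `t > 0`, and these tend to
`⟪∇f x, y-x⟫` as `t ↓ 0`.
-/

open scoped RealInnerProductSpace

theorem smooth_iff_lower_combination {d : ℕ} (f : EuclideanSpace ℝ (Fin d) → ℝ)
    (hf : Differentiable ℝ f) {L : ℝ} (hL : 0 < L) :
    (∀ x y, f y ≤ f x + ⟪gradient f x, y - x⟫ + L / 2 * ‖y - x‖ ^ 2) ↔
    (∀ x y : EuclideanSpace ℝ (Fin d), ∀ lam : ℝ, lam ∈ Set.Icc (0 : ℝ) 1 →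
      f (lam • x + (1 - lam) • y) ≥
        lam * f x + (1 - lam) * f y - L / 2 * lam * (1 - lam) * ‖x - y‖ ^ 2) := by
  constructor
  · rintro h x y l ⟨h0, h1⟩
    have hx := h (l • x + (1 - l) • y) x
    have hy := h (l • x + (1 - l) • y) y
    have ex : x - (l • x + (1 - l) • y) = (1 - l) • (x - y) := by module
    have ey : y - (l • x + (1 - l) • y) = (-l) • (x - y) := by module
    rw [ex, inner_smul_right, norm_smul, mul_pow, Real.norm_eq_abs, sq_abs] at hx
    rw [ey, inner_smul_right, norm_smul, mul_pow, Real.norm_eq_abs, sq_abs] at hy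
    have hx' := mul_le_mul_of_nonneg_left hx h0
    have hy' := mul_le_mul_of_nonneg_left hy (sub_nonneg.2 h1)
    linear_combination hx' + hy'
  · intro h x y
    have hline : HasDerivAt (fun t : ℝ => x + t • (y - x)) (y - x) 0 := by
      simpa using ((hasDerivAt_id (0 : ℝ)).smul_const (y - x)).const_add x
    have hgrad : HasFDerivAt f (InnerProductSpace.toDual ℝ _ (gradient f x))
        (x + (0 : ℝ) • (y - x)) := by
      simpa using (hf x).hasGradientAt.hasFDerivAt
    have hderiv : HasDerivAt (fun t : ℝ => f (x + t • (y - x))) ⟪gradient f x, y - x⟫ 0 := by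
      simpa [Function.comp_def] using hgrad.comp_hasDerivAt (0 : ℝ) hline
    have hlim := hderiv.tendsto_slope_zero_right
    have hbound : f y - f x - L / 2 * ‖y - x‖ ^ 2 ≤ ⟪gradient f x, y - x⟫ := by
      refine ge_of_tendsto hlim ?_
      filter_upwards [Ioo_mem_nhdsGT (zero_lt_one' ℝ)] with t ⟨ht0, ht1⟩
      have ht := h y x t ⟨ht0.le, ht1.le⟩
      have e : t • y + (1 - t) • x = x + t • (y - x) := by module
      rw [e] at ht
      simp only [zero_add, zero_smul, add_zero, smul_eq_mul]
      rw [inv_mul_eq_div, le_div_iff₀ ht0]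
      -- `t(1-t) ≤ t`: the discarded term `(L/2)t²‖y-x‖²` is nonnegative.
      have hsq : 0 ≤ L / 2 * t ^ 2 * ‖y - x‖ ^ 2 := by positivity
      linear_combination ht + hsq
    linarith
end

section
/- Let f : ℝ^d → ℝ be convex and differentiable, let L > 0, and suppose the Fenchel conjugate f* is finite-valued on ℝ^d. Then f is L-smooth if and only if f*(λu + (1−λ)v) ≤ λ f*(u) + (1−λ) f*(v) − (1/(2L)) λ(1−λ) ‖u−v‖² for all u, v ∈ ℝ^d and all λ ∈ [0,1]. -/
/-!
Everything rests on the quadratic lower bound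
`fstar u ≥ ⟪x, u⟫ - f x + ‖u - ∇f x‖² / (2L)` for all `x` and `u`.

* If `f` is `L`-smooth, the bound follows by evaluating the supremum defining `fstar u` at
  `x + (u - ∇f x) / L`. Averaging it at `u` and `v` with weights `lam`, `1 - lam`, and taking the
  supremum over `x`, gives strong convexity of `fstar`.
* Conversely, convexity of `f` gives equality in Fenchel-Young, `fstar (∇f x) = ⟪x, ∇f x⟫ - f x`.
  Comparing strong convexity on the segment from `∇f x` to `∇f y` with the Fenchel-Young inequality
  at `x`, dividing by `lam` and letting `lam → 0` gives the bound at `u = ∇f y`. Since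
  `fstar (∇f y) = ⟪y, ∇f y⟫ - f y`, Young's inequality for `⟪y - x, ∇f y - ∇f x⟫` then yields
  smoothness.
-/

open scoped RealInnerProductSpace

section

variable {E : Type*} [NormedAddCommGroup E] [InnerProductSpace ℝ E]

/-- First-order characterization of convexity: the graph lies above its tangent hyperplanes. -/
lemma add_inner_gradient_le [CompleteSpace E] {f : E → ℝ}
    (hconv : ConvexOn ℝ Set.univ f) (hf : Differentiable ℝ f) (x y : E) :
    f x + ⟪gradient f x, y - x⟫ ≤ f y := by
  have hline : ConvexOn ℝ Set.univ (f ∘ AffineMap.lineMap (k := ℝ) x y) := by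
    simpa using hconv.comp_affineMap (AffineMap.lineMap (k := ℝ) x y)
  have hder : HasDerivAt (f ∘ AffineMap.lineMap (k := ℝ) x y) ⟪gradient f x, y - x⟫ 0 := by
    have h1 : HasFDerivAt f (InnerProductSpace.toDual ℝ E (gradient f x))
        (AffineMap.lineMap (k := ℝ) x y 0) := by
      simpa using (hf x).hasGradientAt.hasFDerivAt
    have h2 := h1.comp_hasDerivAt (0 : ℝ) AffineMap.hasDerivAt_lineMap
    simpa using h2
  have h := hline.le_slope_of_hasDerivAt (Set.mem_univ 0) (Set.mem_univ 1) one_pos hder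
  rw [slope_def_field, Function.comp_apply, Function.comp_apply, AffineMap.lineMap_apply_one,
    AffineMap.lineMap_apply_zero, sub_zero, div_one] at h
  linarith

/-- Equality in Fenchel-Young at the gradient. -/
lemma conjugate_gradient_eq [CompleteSpace E] {f : E → ℝ}
    (hconv : ConvexOn ℝ Set.univ f) (hf : Differentiable ℝ f) {fstar : E → ℝ}
    (hfstar : ∀ u, IsLUB (Set.range fun x => ⟪x, u⟫ - f x) (fstar u)) (x : E) :
    fstar (gradient f x) = ⟪x, gradient f x⟫ - f x := by
  refine le_antisymm ((hfstar _).2 ?_) ((hfstar _).1 ⟨x, rfl⟩)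
  rintro _ ⟨z, rfl⟩
  have h := add_inner_gradient_le hconv hf x z
  rw [inner_sub_right, real_inner_comm z, real_inner_comm x] at h
  simp only
  linarith

/-- A parabola of curvature `L` tangent to `f` from above at `x` turns into a parabola of
curvature `1 / L` below the conjugate. -/
lemma conjugate_lower_bound {f : E → ℝ} {L : ℝ} (hL : 0 < L) {fstar : E → ℝ}
    (hfstar : ∀ u, IsLUB (Set.range fun x => ⟪x, u⟫ - f x) (fstar u)) {x g : E}
    (hg : ∀ y, f y ≤ f x + ⟪g, y - x⟫ + L / 2 * ‖y - x‖ ^ 2) (u : E) :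
    ⟪x, u⟫ - f x + 1 / (2 * L) * ‖u - g‖ ^ 2 ≤ fstar u := by
  -- this point maximizes `⟪·, u⟫` minus the upper parabola
  have h1 : ⟪x + L⁻¹ • (u - g), u⟫ - f (x + L⁻¹ • (u - g)) ≤ fstar u := (hfstar u).1 ⟨_, rfl⟩
  have h2 := hg (x + L⁻¹ • (u - g))
  rw [add_sub_cancel_left, norm_smul, mul_pow, Real.norm_eq_abs, sq_abs, inner_smul_right] at h2
  rw [inner_add_left, real_inner_smul_left] at h1
  have h3 : ⟪u - g, u⟫ - ⟪g, u - g⟫ = ‖u - g‖ ^ 2 := by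
    rw [real_inner_comm (u - g) g, ← inner_sub_right, real_inner_self_eq_norm_sq]
  have h4 : L⁻¹ * ‖u - g‖ ^ 2 - L / 2 * (L⁻¹ ^ 2 * ‖u - g‖ ^ 2) = 1 / (2 * L) * ‖u - g‖ ^ 2 := by
    field_simp
    ring
  rw [← h3, mul_sub, h3] at h4
  linarith

lemma norm_sub_sq_combination_le (u v g : E) (t : ℝ) :
    t * (1 - t) * ‖u - v‖ ^ 2 ≤ t * ‖u - g‖ ^ 2 + (1 - t) * ‖v - g‖ ^ 2 := by
  have h := sq_nonneg ‖t • (u - g) + (1 - t) • (v - g)‖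
  have e : u - v = (u - g) - (v - g) := by abel
  rw [norm_add_sq_real, norm_smul, norm_smul, real_inner_smul_left, inner_smul_right, mul_pow,
    mul_pow, Real.norm_eq_abs, Real.norm_eq_abs, sq_abs, sq_abs] at h
  rw [e, norm_sub_sq_real]
  linarith

/-- Young's inequality `⟪a, b⟫ ≤ (L/2) ‖a‖² + (1/(2L)) ‖b‖²`. -/
lemma inner_le_weighted {L : ℝ} (hL : 0 < L) (a b : E) :
    ⟪a, b⟫ ≤ L / 2 * ‖a‖ ^ 2 + 1 / (2 * L) * ‖b‖ ^ 2 := by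
  have h : 0 ≤ 1 / (2 * L) * ‖L • a - b‖ ^ 2 := by positivity
  rw [norm_sub_sq_real, norm_smul, real_inner_smul_left, mul_pow, Real.norm_eq_abs, sq_abs] at h
  have e : 1 / (2 * L) * (L ^ 2 * ‖a‖ ^ 2 - 2 * (L * ⟪a, b⟫) + ‖b‖ ^ 2)
      = L / 2 * ‖a‖ ^ 2 - ⟪a, b⟫ + 1 / (2 * L) * ‖b‖ ^ 2 := by
    field_simp
  linarith

end

/-- The limit `t → 0` in `a + (1 - t) * c ≤ b`. -/
lemma add_le_of_forall_mul_le {a b c : ℝ} (hc : 0 ≤ c)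
    (h : ∀ t : ℝ, 0 < t → t ≤ 1 → t * a ≤ t * b - t * (1 - t) * c) : a + c ≤ b := by
  refine le_of_forall_pos_le_add fun ε hε => ?_
  have hpos : 0 < c + ε := by positivity
  -- with this `t`, the error term satisfies `t * c ≤ ε`
  have h1 : a ≤ b - (1 - ε / (c + ε)) * c := by
    have ht : 0 < ε / (c + ε) := by positivity
    refine le_of_mul_le_mul_left ?_ ht
    have := h _ ht ((div_le_one hpos).2 (by linarith))
    linarith
  have h2 : ε / (c + ε) * c ≤ ε := by
    rw [div_mul_eq_mul_div, div_le_iff₀ hpos]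
    nlinarith
  linarith

theorem smooth_iff_conjugate_strongConvex_combination {d : ℕ}
    (f : EuclideanSpace ℝ (Fin d) → ℝ)
    (hconv : ConvexOn ℝ Set.univ f) (hf : Differentiable ℝ f) {L : ℝ} (hL : 0 < L)
    (fstar : EuclideanSpace ℝ (Fin d) → ℝ)
    (hfstar : ∀ u, IsLUB (Set.range fun x => ⟪x, u⟫ - f x) (fstar u)) :
    (∀ x y, f y ≤ f x + ⟪gradient f x, y - x⟫ + L / 2 * ‖y - x‖ ^ 2) ↔
    (∀ u v : EuclideanSpace ℝ (Fin d), ∀ lam : ℝ, lam ∈ Set.Icc (0 : ℝ) 1 →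
      fstar (lam • u + (1 - lam) • v) ≤
        lam * fstar u + (1 - lam) * fstar v
          - 1 / (2 * L) * lam * (1 - lam) * ‖u - v‖ ^ 2) := by
  constructor
  · rintro hs u v t ⟨ht0, ht1⟩
    refine (hfstar _).2 ?_
    rintro _ ⟨x, rfl⟩
    have hu := mul_le_mul_of_nonneg_left (conjugate_lower_bound hL hfstar (hs x) u) ht0
    have hv := mul_le_mul_of_nonneg_left (conjugate_lower_bound hL hfstar (hs x) v)
      (sub_nonneg.2 ht1)
    have hn := mul_le_mul_of_nonneg_left
      (norm_sub_sq_combination_le u v (gradient f x) t) (by positivity : 0 ≤ 1 / (2 * L))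
    simp only [inner_add_right, inner_smul_right]
    linarith
  · intro hs x y
    have hx := conjugate_gradient_eq hconv hf hfstar x
    have hy := conjugate_gradient_eq hconv hf hfstar y
    have hbound : ⟪x, gradient f y⟫ - f x + 1 / (2 * L) * ‖gradient f y - gradient f x‖ ^ 2
        ≤ fstar (gradient f y) := by
      refine add_le_of_forall_mul_le (by positivity) fun t ht0 ht1 => ?_
      have h1 := hs (gradient f y) (gradient f x) t ⟨ht0.le, ht1⟩
      have h2 : ⟪x, t • gradient f y + (1 - t) • gradient f x⟫ - f x ≤ _ :=
        (hfstar (t • gradient f y + (1 - t) • gradient f x)).1 ⟨x, rfl⟩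
      rw [inner_add_right, inner_smul_right, inner_smul_right] at h2
      rw [hx] at h1
      linarith
    have hyoung := inner_le_weighted hL (y - x) (gradient f y - gradient f x)
    rw [hy] at hbound
    rw [real_inner_comm (y - x)]
    simp only [inner_sub_left, inner_sub_right] at hyoung ⊢
    linarith
end

section
/- Let f : ℝ^d → ℝ be convex and differentiable, let L > 0, and suppose the Fenchel conjugate f* is finite-valued and differentiable on ℝ^d. Then f is L-smooth if and only if ⟨∇f*(u) − ∇f*(v), u − v⟩ ≥ (1/L) ‖u − v‖² for all u, v ∈ ℝ^d. -/
/-!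
The heart of the matter is that `∇f` and `∇f*` are mutually inverse. If `u = ∇f x`, convexity of `f`
gives equality in the Fenchel–Young inequality `⟪x, u⟫ ≤ f x + f* u`
(`fenchel_eq_of_gradient`), so `x` is a subgradient of `f*` at `u`, whence `∇f* u = x`. Conversely
every `u` is a gradient of `f`: since `f*` is finite and continuous it is bounded on the unit ball
around `u`, so `x ↦ ⟪x, u⟫ - f x` tends to `-∞` and attains its maximum at a critical point
(`exists_gradient_eq`).

If `f` is `L`-smooth, `x = ∇f* u`, and the quadratic upper bound for `f` is evaluated at
`x + (v - u) / L`, then Fenchel–Young yields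
`f* v ≥ f* u + ⟪∇f* u, v - u⟫ + ‖v - u‖² / (2L)`; adding the inequality with `u`, `v` exchanged gives
the monotonicity bound. Conversely, that bound at `u = ∇f x`, `v = ∇f y` and Cauchy–Schwarz show that
`∇f` is `L`-Lipschitz, and comparing derivatives along segments (`smooth_of_lipschitz_gradient`) gives
`L`-smoothness.
-/

open scoped RealInnerProductSpace

section Helpers

variable {E : Type*} [NormedAddCommGroup E] [InnerProductSpace ℝ E]

lemma hasDerivAt_line [CompleteSpace E] {f : E → ℝ} (hf : Differentiable ℝ f) (x h : E) (t : ℝ) :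
    HasDerivAt (fun s : ℝ => f (x + s • h)) ⟪gradient f (x + t • h), h⟫ t := by
  have h1 : HasDerivAt (fun s : ℝ => x + s • h) h t := by
    simpa using ((hasDerivAt_id t).smul_const h).const_add x
  have h2 := ((hf (x + t • h)).hasGradientAt.hasFDerivAt).comp_hasDerivAt t h1
  simpa [Function.comp_def] using h2

/-- First-order characterization of convexity. -/
lemma gradient_inequality [CompleteSpace E] {f : E → ℝ} (hc : ConvexOn ℝ Set.univ f)
    (hf : Differentiable ℝ f) (x y : E) : f x + ⟪gradient f x, y - x⟫ ≤ f y := by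
  have hc' : ConvexOn ℝ Set.univ (fun s : ℝ => f (x + s • (y - x))) := by
    have := hc.comp_affineMap (AffineMap.lineMap x y : ℝ →ᵃ[ℝ] E)
    simpa [Function.comp_def, AffineMap.lineMap_apply, add_comm] using this
  have h := hc'.le_slope_of_hasDerivAt (Set.mem_univ 0) (Set.mem_univ 1) one_pos
    (hasDerivAt_line hf x (y - x) 0)
  simp [slope_def_field] at h ⊢
  linarith

/-- A differentiable function has no subgradient other than its gradient. -/
lemma gradient_eq_of_subgradient [CompleteSpace E] {g : E → ℝ} {u x : E}
    (hg : DifferentiableAt ℝ g u) (h : ∀ w, g u + ⟪x, w - u⟫ ≤ g w) : gradient g u = x := by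
  have hd : HasFDerivAt (fun w => g w - ⟪x, w⟫)
      (InnerProductSpace.toDual ℝ E (gradient g u) - innerSL ℝ x) u :=
    hg.hasGradientAt.hasFDerivAt.sub (innerSL ℝ x).hasFDerivAt
  have hm : IsLocalMin (fun w => g w - ⟪x, w⟫) u := Filter.Eventually.of_forall fun w => by
    have := h w
    rw [inner_sub_right] at this
    linarith
  have h0 := hm.hasFDerivAt_eq_zero hd
  refine ext_inner_right ℝ fun v => ?_
  have := congrArg (fun l => l v) h0
  simp at this ⊢
  linarith

/-- Equality in the Fenchel–Young inequality at a gradient. -/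
lemma fenchel_eq_of_gradient [CompleteSpace E] {f fstar : E → ℝ} (hc : ConvexOn ℝ Set.univ f)
    (hf : Differentiable ℝ f)
    (hs : ∀ u, IsLUB (Set.range fun x => ⟪x, u⟫ - f x) (fstar u)) (x : E) :
    fstar (gradient f x) = ⟪x, gradient f x⟫ - f x := by
  refine le_antisymm ((hs _).2 ?_) ((hs _).1 ⟨x, rfl⟩)
  rintro _ ⟨y, rfl⟩
  have := gradient_inequality hc hf x y
  rw [inner_sub_right, real_inner_comm y, real_inner_comm x] at this
  dsimp only
  linarith

/-- `∇f*` is a left inverse of `∇f`. -/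
lemma gradient_fenchel_gradient [CompleteSpace E] {f fstar : E → ℝ} (hc : ConvexOn ℝ Set.univ f)
    (hf : Differentiable ℝ f)
    (hs : ∀ u, IsLUB (Set.range fun x => ⟪x, u⟫ - f x) (fstar u))
    (hd : Differentiable ℝ fstar) (x : E) :
    gradient fstar (gradient f x) = x := by
  refine gradient_eq_of_subgradient (hd _) fun w => ?_
  have h1 := fenchel_eq_of_gradient hc hf hs x
  have h2 : ⟪x, w⟫ - f x ≤ fstar w := (hs w).1 ⟨x, rfl⟩
  rw [inner_sub_right]
  linarith

/-- The gradient of `f` is surjective when its conjugate is finite and differentiable. -/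
lemma exists_gradient_eq [FiniteDimensional ℝ E] [CompleteSpace E] {f fstar : E → ℝ}
    (hf : Differentiable ℝ f)
    (hs : ∀ u, IsLUB (Set.range fun x => ⟪x, u⟫ - f x) (fstar u))
    (hd : Differentiable ℝ fstar) (u : E) : ∃ x, gradient f x = u := by
  have := FiniteDimensional.proper ℝ E
  obtain ⟨M, hM⟩ := (isCompact_closedBall u 1).exists_bound_of_continuousOn hd.continuous.continuousOn
  have hbound : ∀ x, ‖x‖ - M ≤ f x - ⟪x, u⟫ := fun x => by
    -- Fenchel–Young at the point of the unit ball around `u` furthest in the direction of `x`;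
    -- for `x = 0` that point is `u` itself.
    have h1 : ⟪x, u + ‖x‖⁻¹ • x⟫ - f x ≤ fstar (u + ‖x‖⁻¹ • x) := (hs _).1 ⟨x, rfl⟩
    have h2 : ‖fstar (u + ‖x‖⁻¹ • x)‖ ≤ M := by
      apply hM
      rw [mem_closedBall_iff_norm, add_sub_cancel_left, norm_smul, norm_inv, norm_norm]
      exact inv_mul_le_one
    have h3 : ⟪x, ‖x‖⁻¹ • x⟫ = ‖x‖ := by
      rw [real_inner_smul_right, real_inner_self_eq_norm_sq]
      rcases eq_or_ne ‖x‖ 0 with h | h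
      · simp [h]
      · field_simp
    rw [inner_add_right, h3] at h1
    have := (le_abs_self _).trans h2
    linarith
  have hlim : Filter.Tendsto (fun x => f x - ⟪x, u⟫) (Filter.cocompact E) Filter.atTop :=
    Filter.tendsto_atTop_mono hbound
      (Filter.tendsto_atTop_add_const_right _ (-M) (tendsto_norm_cocompact_atTop))
  have hcont : Continuous fun x => f x - ⟪x, u⟫ :=
    hf.continuous.sub (continuous_id.inner continuous_const)
  obtain ⟨x, hx⟩ := hcont.exists_forall_le hlim
  refine ⟨x, gradient_eq_of_subgradient (hf x) fun w => ?_⟩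
  have := hx w
  rw [inner_sub_right, real_inner_comm, real_inner_comm x]
  linarith

/-- The descent lemma. -/
lemma smooth_of_lipschitz_gradient [CompleteSpace E] {f : E → ℝ} (hf : Differentiable ℝ f) {L : ℝ}
    (hL : ∀ x y, ‖gradient f x - gradient f y‖ ≤ L * ‖x - y‖) (x y : E) :
    f y ≤ f x + ⟪gradient f x, y - x⟫ + L / 2 * ‖y - x‖ ^ 2 := by
  set h := y - x with hh
  have hder : ∀ t : ℝ, HasDerivAt
      (fun s : ℝ => f (x + s • h) - s * ⟪gradient f x, h⟫ - s ^ 2 * (L / 2 * ‖h‖ ^ 2))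
      (⟪gradient f (x + t • h), h⟫ - ⟪gradient f x, h⟫ - 2 * t * (L / 2 * ‖h‖ ^ 2)) t := fun t => by
    have h1 := ((hasDerivAt_line hf x h t).sub
      ((hasDerivAt_id t).mul_const ⟪gradient f x, h⟫)).sub
      ((hasDerivAt_pow 2 t).mul_const (L / 2 * ‖h‖ ^ 2))
    refine HasDerivAt.congr_deriv h1 ?_
    simp
  have hanti := antitoneOn_of_deriv_nonpos (convex_Ici (0 : ℝ))
    (fun t _ => (hder t).continuousAt.continuousWithinAt)
    (fun t _ => (hder t).differentiableAt.differentiableWithinAt)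
    (fun t ht => by
      rw [interior_Ici, Set.mem_Ioi] at ht
      rw [(hder t).deriv, ← inner_sub_left]
      have h1 := real_inner_le_norm (gradient f (x + t • h) - gradient f x) h
      have h2 := hL (x + t • h) x
      rw [add_sub_cancel_left, norm_smul, Real.norm_of_nonneg ht.le] at h2
      nlinarith [mul_le_mul_of_nonneg_right h2 (norm_nonneg h)])
  have h01 := hanti (Set.mem_Ici.2 le_rfl) (Set.mem_Ici.2 zero_le_one) zero_le_one
  have hxy : x + h = y := by rw [hh]; abel
  simp [hxy] at h01 ⊢
  linarith

/-- The conjugate of an `L`-smooth function is `1/L`-strongly convex. -/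
lemma fenchel_strong_convexity [CompleteSpace E] {f fstar : E → ℝ} (hc : ConvexOn ℝ Set.univ f)
    (hf : Differentiable ℝ f) {L : ℝ} (hL : 0 < L)
    (hs : ∀ u, IsLUB (Set.range fun x => ⟪x, u⟫ - f x) (fstar u))
    (hsm : ∀ x y, f y ≤ f x + ⟪gradient f x, y - x⟫ + L / 2 * ‖y - x‖ ^ 2) (x v : E) :
    fstar (gradient f x) + ⟪x, v - gradient f x⟫ + 1 / (2 * L) * ‖v - gradient f x‖ ^ 2
      ≤ fstar v := by
  have h1 := fenchel_eq_of_gradient hc hf hs x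
  set u := gradient f x with hu
  -- This point minimizes the quadratic upper bound of `f` at `x` minus `⟪·, v⟫`.
  have h2 : ⟪x + L⁻¹ • (v - u), v⟫ - f (x + L⁻¹ • (v - u)) ≤ fstar v := (hs v).1 ⟨_, rfl⟩
  have h3 := hsm x (x + L⁻¹ • (v - u))
  rw [add_sub_cancel_left, norm_smul, Real.norm_of_nonneg (inv_pos.2 hL).le, ← hu,
    real_inner_smul_right] at h3
  rw [inner_add_left, real_inner_smul_left] at h2
  have h4 : ⟪v - u, v⟫ - ⟪u, v - u⟫ = ‖v - u‖ ^ 2 := by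
    rw [real_inner_comm (v - u) u, ← inner_sub_right, real_inner_self_eq_norm_sq]
  have h5 : L / 2 * (L⁻¹ * ‖v - u‖) ^ 2 = 1 / (2 * L) * ‖v - u‖ ^ 2 := by field_simp
  have h6 : L⁻¹ * ⟪v - u, v⟫ - L⁻¹ * ⟪u, v - u⟫ = 2 * (1 / (2 * L) * ‖v - u‖ ^ 2) := by
    rw [← mul_sub, h4]; field_simp
  rw [inner_sub_right]
  linarith

end Helpers

theorem smooth_iff_conjugate_gradient_strong_monotone {d : ℕ}
    (f : EuclideanSpace ℝ (Fin d) → ℝ)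
    (hconv : ConvexOn ℝ Set.univ f) (hf : Differentiable ℝ f) {L : ℝ} (hL : 0 < L)
    (fstar : EuclideanSpace ℝ (Fin d) → ℝ)
    (hfstar : ∀ u, IsLUB (Set.range fun x => ⟪x, u⟫ - f x) (fstar u))
    (hdiff : Differentiable ℝ fstar) :
    (∀ x y, f y ≤ f x + ⟪gradient f x, y - x⟫ + L / 2 * ‖y - x‖ ^ 2) ↔
    (∀ u v : EuclideanSpace ℝ (Fin d),
      ⟪gradient fstar u - gradient fstar v, u - v⟫ ≥ 1 / L * ‖u - v‖ ^ 2) := by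
  have hinv := gradient_fenchel_gradient hconv hf hfstar hdiff
  constructor
  · intro hsm u v
    obtain ⟨x, rfl⟩ := exists_gradient_eq hf hfstar hdiff u
    obtain ⟨y, rfl⟩ := exists_gradient_eq hf hfstar hdiff v
    rw [hinv, hinv]
    have h1 := fenchel_strong_convexity hconv hf hL hfstar hsm x (gradient f y)
    have h2 := fenchel_strong_convexity hconv hf hL hfstar hsm y (gradient f x)
    rw [norm_sub_rev] at h1
    have h3 : 1 / L * ‖gradient f x - gradient f y‖ ^ 2
        = 2 * (1 / (2 * L) * ‖gradient f x - gradient f y‖ ^ 2) := by field_simp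
    rw [ge_iff_le, h3]
    simp only [inner_sub_left, inner_sub_right] at h1 h2 ⊢
    linarith
  · intro hmono
    refine smooth_of_lipschitz_gradient hf fun x y => ?_
    have h1 := hmono (gradient f x) (gradient f y)
    rw [hinv, hinv] at h1
    have h2 := h1.le.trans (real_inner_le_norm _ _)
    rw [one_div, inv_mul_le_iff₀ hL] at h2
    -- Cancel one factor of `‖∇f x - ∇f y‖`, unless it vanishes.
    rcases (norm_nonneg (gradient f x - gradient f y)).eq_or_lt with h | h
    · rw [← h]; positivity
    · refine le_of_mul_le_mul_right ?_ h
      linarith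
end

section
/- Let f : ℝ^d → ℝ be differentiable and let 0 < μ < L. Then f is L-smooth and μ-strongly convex if and only if ⟨∇f(x) − ∇f(y), x − y⟩ ≥ (Lμ/(L+μ)) ‖x − y‖² + (1/(L+μ)) ‖∇f(x) − ∇f(y)‖² for all x, y ∈ ℝ^d. -/
/-!
Write `g = ∇f x - ∇f y` and `p = x - y`.

For the forward direction, bound `f` at a common point below by the strong convexity quadratic at
one of `x`, `y` and above by the smoothness quadratic at the other. Doing this for two points
placed symmetrically about the midpoint of `x` and `y` and adding cancels the values of `f`, and
leaves an inequality with a free vector parameter `w`; the best choice `w = (g - μ p) / (L - μ)`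
gives the claim (`cocoercive_of_quadratic_bounds`).

For the converse, the inequality says `⟪g - μ p, g - L p⟫ ≤ 0`, which forces
`μ ‖p‖² ≤ ⟪g, p⟫ ≤ L ‖p‖²`. Integrating a one-sided bound of this kind along segments
(`lower_quadratic_of_monotone`), applied to `f` with constant `μ` and to `-f` with constant `-L`,
gives the two quadratic bounds.
-/

open scoped RealInnerProductSpace

section Aux

variable {E : Type*} [NormedAddCommGroup E] [InnerProductSpace ℝ E]

/-- A lower bound on the monotonicity modulus of the gradient integrates to a quadratic lower bound
on the function. The constant `c` may be negative, so that the lemma also yields upper bounds,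
through `-f`. -/
lemma lower_quadratic_of_monotone [CompleteSpace E] {f : E → ℝ} {g : E → E}
    (hf : ∀ x, HasGradientAt f (g x) x)
    {c : ℝ} (h : ∀ x y, c * ‖x - y‖ ^ 2 ≤ ⟪g x - g y, x - y⟫) (x y : E) :
    f x + ⟪g x, y - x⟫ + c / 2 * ‖y - x‖ ^ 2 ≤ f y := by
  set p := y - x with hp
  have hd : ∀ t : ℝ, HasDerivAt
      (fun t : ℝ => f (x + t • p) - t * ⟪g x, p⟫ - c / 2 * ‖p‖ ^ 2 * t ^ 2)
      (⟪g (x + t • p), p⟫ - ⟪g x, p⟫ - c * ‖p‖ ^ 2 * t) t := by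
    intro t
    have hl : HasDerivAt (fun t : ℝ => x + t • p) p t := by
      simpa using ((hasDerivAt_id t).smul_const p).const_add x
    have h1 : HasDerivAt (fun t : ℝ => f (x + t • p)) ⟪g (x + t • p), p⟫ t := by
      simpa [Function.comp_def] using (hf (x + t • p)).hasFDerivAt.comp_hasDerivAt t hl
    have h2 := (hasDerivAt_id t).mul_const ⟪g x, p⟫
    have h3 := ((hasDerivAt_id t).pow 2).const_mul (c / 2 * ‖p‖ ^ 2)
    refine ((h1.sub h2).sub h3).congr_deriv ?_
    simp
    ring
  have hm : MonotoneOn (fun t : ℝ => f (x + t • p) - t * ⟪g x, p⟫ - c / 2 * ‖p‖ ^ 2 * t ^ 2)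
      (Set.Icc 0 1) := by
    refine monotoneOn_of_hasDerivWithinAt_nonneg (convex_Icc 0 1)
      (fun t _ => (hd t).continuousAt.continuousWithinAt)
      (fun t _ => (hd t).hasDerivWithinAt) ?_
    intro t ht
    rw [interior_Icc] at ht
    have ht0 : 0 < t := ht.1
    have h1 := h (x + t • p) x
    rw [add_sub_cancel_left, norm_smul, inner_smul_right, inner_sub_left, mul_pow,
      Real.norm_eq_abs, sq_abs] at h1
    refine nonneg_of_mul_nonneg_right ?_ ht0
    linarith
  have h01 := hm (Set.left_mem_Icc.2 zero_le_one) (Set.right_mem_Icc.2 zero_le_one) zero_le_one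
  have hy : x + p = y := by simp [hp]
  simp [hy] at h01
  linarith

lemma cocoercive_of_quadratic_bounds {f : E → ℝ} {g : E → E} {L μ : ℝ} (hμ : 0 < μ) (hμL : μ < L)
    (hL : ∀ x y, f y ≤ f x + ⟪g x, y - x⟫ + L / 2 * ‖y - x‖ ^ 2)
    (hS : ∀ x y, f y ≥ f x + ⟪g x, y - x⟫ + μ / 2 * ‖y - x‖ ^ 2) (x y : E) :
    L * μ / (L + μ) * ‖x - y‖ ^ 2 + 1 / (L + μ) * ‖g x - g y‖ ^ 2 ≤ ⟪g x - g y, x - y⟫ := by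
  have key : ∀ w : E, ⟪g x - g y, y - x + w⟫ + ⟪g x - g y, w⟫ + μ * ‖y - x + w‖ ^ 2
      ≤ L * ‖w‖ ^ 2 := by
    intro w
    have a1 := hL y (y + w)
    have a2 := hS x (y + w)
    have a3 := hL x (x - w)
    have a4 := hS y (x - w)
    rw [show y + w - y = w by abel] at a1
    rw [show y + w - x = y - x + w by abel] at a2
    rw [show x - w - x = -w by abel, norm_neg, inner_neg_right] at a3
    rw [show x - w - y = -(y - x + w) by abel, norm_neg, inner_neg_right] at a4
    rw [inner_sub_left, inner_sub_left]
    linarith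
  have hpos : 0 < L - μ := sub_pos.2 hμL
  have hsum : 0 < L + μ := by linarith
  rw [← neg_sub y x, inner_neg_right, norm_neg]
  generalize g x - g y = v at key ⊢
  generalize y - x = p at key ⊢
  -- The left side of `key` minus the right is a concave quadratic in `w`, maximal at this point.
  have k := key ((L - μ)⁻¹ • (v + μ • p))
  rw [norm_add_sq_real p] at k
  simp only [inner_add_right, inner_smul_right, norm_smul, mul_pow, norm_add_sq_real v,
    real_inner_self_eq_norm_sq, Real.norm_eq_abs, sq_abs, real_inner_comm v p] at k
  have k2 : (L + μ) * ⟪v, p⟫ + L * μ * ‖p‖ ^ 2 + ‖v‖ ^ 2 ≤ 0 := by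
    have e := mul_le_mul_of_nonneg_left k hpos.le
    have hne : L - μ ≠ 0 := hpos.ne'
    field_simp at e
    nlinarith
  have : L * μ / (L + μ) * ‖p‖ ^ 2 + 1 / (L + μ) * ‖v‖ ^ 2
      = (L * μ * ‖p‖ ^ 2 + ‖v‖ ^ 2) / (L + μ) := by ring
  rw [this, div_le_iff₀ hsum]
  linarith

/-- The hypothesis amounts to `⟪v - μ p, v - L p⟫ ≤ 0`, that is, to `v` lying in the ball with
diameter from `μ p` to `L p`. -/
lemma inner_bounds_of_cocoercive {L μ : ℝ} (hμ : 0 < μ) (hμL : μ < L) {v p : E}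
    (h : L * μ / (L + μ) * ‖p‖ ^ 2 + 1 / (L + μ) * ‖v‖ ^ 2 ≤ ⟪v, p⟫) :
    μ * ‖p‖ ^ 2 ≤ ⟪v, p⟫ ∧ ⟪v, p⟫ ≤ L * ‖p‖ ^ 2 := by
  have hpos : 0 < L - μ := sub_pos.2 hμL
  have hsum : 0 < L + μ := by linarith
  have e : L * μ / (L + μ) * ‖p‖ ^ 2 + 1 / (L + μ) * ‖v‖ ^ 2
      = (L * μ * ‖p‖ ^ 2 + ‖v‖ ^ 2) / (L + μ) := by ring
  rw [e, div_le_iff₀ hsum] at h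
  have expand : ∀ c : ℝ, ‖v - c • p‖ ^ 2 = ‖v‖ ^ 2 - 2 * (c * ⟪v, p⟫) + c ^ 2 * ‖p‖ ^ 2 := by
    intro c
    rw [norm_sub_sq_real, inner_smul_right, norm_smul, mul_pow, Real.norm_eq_abs, sq_abs]
  have h1 := expand μ
  have h2 := expand L
  have h3 := sq_nonneg ‖v - μ • p‖
  have h4 := sq_nonneg ‖v - L • p‖
  constructor <;> refine le_of_mul_le_mul_left ?_ hpos <;> nlinarith

end Aux

theorem smooth_and_strongConvex_iff_interpolation_monotone {d : ℕ}
    (f : EuclideanSpace ℝ (Fin d) → ℝ)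
    (hf : Differentiable ℝ f) {L μ : ℝ} (hμ : 0 < μ) (hμL : μ < L) :
    ((∀ x y, f y ≤ f x + ⟪gradient f x, y - x⟫ + L / 2 * ‖y - x‖ ^ 2) ∧
      (∀ x y, f y ≥ f x + ⟪gradient f x, y - x⟫ + μ / 2 * ‖y - x‖ ^ 2)) ↔
    (∀ x y : EuclideanSpace ℝ (Fin d),
      ⟪gradient f x - gradient f y, x - y⟫ ≥
        L * μ / (L + μ) * ‖x - y‖ ^ 2
          + 1 / (L + μ) * ‖gradient f x - gradient f y‖ ^ 2) := by
  have hg : ∀ x, HasGradientAt f (gradient f x) x := fun x => (hf x).hasGradientAt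
  constructor
  · rintro ⟨hL, hS⟩ x y
    exact cocoercive_of_quadratic_bounds hμ hμL hL hS x y
  · intro h
    have hb := fun x y => inner_bounds_of_cocoercive hμ hμL (h x y)
    refine ⟨fun x y => ?_, lower_quadratic_of_monotone hg fun x y => (hb x y).1⟩
    have hn : ∀ x, HasGradientAt (fun z => -f z) (-gradient f x) x := by
      intro x
      rw [hasGradientAt_iff_hasFDerivAt, map_neg]
      exact (hg x).hasFDerivAt.neg
    have k := lower_quadratic_of_monotone (c := -L) hn (fun x y => by
      rw [← neg_sub', inner_neg_left]
      linarith [(hb x y).2]) x y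
    rw [inner_neg_left] at k
    linarith
end

section
/- Let f : ℝ^d → ℝ be differentiable and let 0 < μ < L. Then f is L-smooth and μ-strongly convex if and only if f(y) ≥ f(x) + ⟨∇f(x), y − x⟩ + (1/(2L)) ‖∇f(x) − ∇f(y)‖² + (μL/(2(L−μ))) ‖x − y − (1/L)(∇f(x) − ∇f(y))‖² for all x, y ∈ ℝ^d. -/
/-!
Write `v = y - x` and `g = ∇f x - ∇f y`. The extra terms in the interpolation bound regroup as
`μ/2 ‖v‖² + ‖g + μ v‖² / (2 (L - μ))` (`interpolation_terms_eq`).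

If `f` is smooth and strongly convex, compare the quadratic minorant of `f` at `x` with its quadratic
majorant at `y` in a common point `z = y + w`. This gives
`f y ≥ f x + ⟪∇f x, v⟫ + ⟪g, w⟫ + μ/2 ‖w + v‖² - L/2 ‖w‖²`, and the best choice
`w = (g + μ v) / (L - μ)` makes the right-hand side exactly the interpolation bound.

Conversely, dropping the square `‖g + μ v‖²` leaves strong convexity. Exchanging `x` and `y` and
keeping only `‖g‖² / (2 L)` leaves smoothness, because `L/2 ‖v‖² + ⟪g, v⟫ + ‖g‖² / (2 L)` is a
perfect square.
-/

open scoped RealInnerProductSpace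

section Quadratic

variable {E : Type*} [NormedAddCommGroup E] [InnerProductSpace ℝ E]

theorem interpolation_terms_eq {L μ : ℝ} (hL : L ≠ 0) (hLμ : L - μ ≠ 0) (g x y : E) :
    1 / (2 * L) * ‖g‖ ^ 2 + μ * L / (2 * (L - μ)) * ‖x - y - (1 / L) • g‖ ^ 2
      = μ / 2 * ‖y - x‖ ^ 2 + 1 / (2 * (L - μ)) * ‖g + μ • (y - x)‖ ^ 2 := by
  have h : x - y - (1 / L) • g = -((y - x) + (1 / L) • g) := by abel
  rw [h, norm_neg]
  generalize y - x = v
  rw [norm_add_sq_real, norm_add_sq_real, norm_smul, norm_smul, mul_pow, mul_pow,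
    inner_smul_right, inner_smul_right, real_inner_comm, Real.norm_eq_abs, Real.norm_eq_abs,
    sq_abs, sq_abs]
  field_simp
  ring

/-- The value at its maximizer of the concave quadratic
`w ↦ ⟪g, w⟫ + μ/2 ‖w + v‖² - L/2 ‖w‖²`. -/
theorem quadratic_gap_at_maximizer {L μ : ℝ} (hLμ : L - μ ≠ 0) (g v w : E)
    (hw : w = (1 / (L - μ)) • (g + μ • v)) :
    ⟪g, w⟫ + μ / 2 * ‖w + v‖ ^ 2 - L / 2 * ‖w‖ ^ 2
      = μ / 2 * ‖v‖ ^ 2 + 1 / (2 * (L - μ)) * ‖g + μ • v‖ ^ 2 := by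
  have hg : g = (L - μ) • w - μ • v := by
    rw [hw, smul_smul, mul_one_div_cancel hLμ, one_smul, add_sub_cancel_right]
  have hgv : g + μ • v = (L - μ) • w := by rw [hg, sub_add_cancel]
  rw [hgv, hg, norm_add_sq_real, norm_smul, mul_pow, Real.norm_eq_abs, sq_abs, inner_sub_left,
    real_inner_smul_left, real_inner_smul_left, real_inner_self_eq_norm_sq, real_inner_comm w v]
  field_simp
  ring

theorem quadratic_nonneg {L : ℝ} (hL : 0 < L) (g v : E) :
    0 ≤ L / 2 * ‖v‖ ^ 2 + ⟪g, v⟫ + 1 / (2 * L) * ‖g‖ ^ 2 := by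
  have h : L / 2 * ‖v‖ ^ 2 + ⟪g, v⟫ + 1 / (2 * L) * ‖g‖ ^ 2
      = 1 / (2 * L) * ‖g + L • v‖ ^ 2 := by
    rw [norm_add_sq_real, norm_smul, mul_pow, inner_smul_right, Real.norm_eq_abs, sq_abs]
    field_simp
    ring
  rw [h]
  positivity

end Quadratic

theorem smooth_and_strongConvex_iff_interpolation_bound {d : ℕ}
    (f : EuclideanSpace ℝ (Fin d) → ℝ)
    (hf : Differentiable ℝ f) {L μ : ℝ} (hμ : 0 < μ) (hμL : μ < L) :
    ((∀ x y, f y ≤ f x + ⟪gradient f x, y - x⟫ + L / 2 * ‖y - x‖ ^ 2) ∧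
      (∀ x y, f y ≥ f x + ⟪gradient f x, y - x⟫ + μ / 2 * ‖y - x‖ ^ 2)) ↔
    (∀ x y : EuclideanSpace ℝ (Fin d),
      f y ≥ f x + ⟪gradient f x, y - x⟫
        + 1 / (2 * L) * ‖gradient f x - gradient f y‖ ^ 2
        + μ * L / (2 * (L - μ)) *
            ‖x - y - (1 / L) • (gradient f x - gradient f y)‖ ^ 2) := by
  have hL : 0 < L := hμ.trans hμL
  have hLμ : 0 < L - μ := sub_pos.2 hμL
  constructor
  · rintro ⟨hsm, hsc⟩ x y
    obtain ⟨w, hw⟩ : ∃ w, w = (1 / (L - μ)) • (gradient f x - gradient f y + μ • (y - x)) :=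
      ⟨_, rfl⟩
    have key := quadratic_gap_at_maximizer hLμ.ne' _ _ w hw
    rw [← interpolation_terms_eq hL.ne' hLμ.ne', inner_sub_left] at key
    have h1 := hsm y (y + w)
    have h2 := hsc x (y + w)
    rw [add_sub_cancel_left] at h1
    have h3 : y + w - x = w + (y - x) := by abel
    rw [h3, inner_add_right] at h2
    linarith
  · intro h
    refine ⟨fun x y => ?_, fun x y => ?_⟩
    · have h1 := h y x
      have h2 := quadratic_nonneg hL (gradient f x - gradient f y) (y - x)
      have h3 : 0 ≤ μ * L / (2 * (L - μ)) *
          ‖y - x - (1 / L) • (gradient f y - gradient f x)‖ ^ 2 := by positivity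
      rw [← neg_sub y x, inner_neg_right, norm_sub_rev (gradient f y)] at h1
      rw [inner_sub_left] at h2
      linarith
    · have h1 := h x y
      have h2 := interpolation_terms_eq hL.ne' hLμ.ne' (gradient f x - gradient f y) x y
      have h3 : 0 ≤ 1 / (2 * (L - μ)) *
          ‖gradient f x - gradient f y + μ • (y - x)‖ ^ 2 := by positivity
      linarith
end

section
/- Let f : ℝ^d → ℝ be convex, differentiable, and L-smooth with L > 0. Suppose f attains its infimum f̄ on ℝ^d and satisfies the Polyak–Łojasiewicz inequality with constant ν > 0, i.e., (1/2)‖∇f(x)‖² ≥ ν (f(x) − f̄) for all x ∈ ℝ^d. Then the gradient descent iteration x_{k+1} = x_k − (1/L)∇f(x_k) satisfies, for every k ≥ 0, f(x_{k+1}) − f̄ ≤ ((L − ν)/(L + ν)) (f(x_k) − f̄). -/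
/-!
Write `g k` for the gradient at `x k`. The heart of the matter is the sufficient-decrease estimate
`f (x (k+1)) + (‖g k‖² + ‖g (k+1)‖²) / (2L) ≤ f (x k)`, which involves the gradients at both ends
of the step. It follows by evaluating `f` at the auxiliary point `w = x (k+1) + g (k+1) / L`:
convexity bounds `f w` below by the tangent at `x (k+1)`, and smoothness bounds it above by the
quadratic model at `x k`. Applying the Polyak–Łojasiewicz inequality to both gradients turns the
estimate into `(L + ν) (f (x (k+1)) - f z) ≤ (L - ν) (f (x k) - f z)`.
-/

open scoped RealInnerProductSpace

/-- A differentiable convex function lies above its tangent planes. -/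
lemma convex_tangent_le {E : Type*} [NormedAddCommGroup E] [InnerProductSpace ℝ E]
    [CompleteSpace E] {f : E → ℝ} (hconv : ConvexOn ℝ Set.univ f) (hf : Differentiable ℝ f)
    (x y : E) : f x + ⟪gradient f x, y - x⟫ ≤ f y := by
  -- Restrict `f` to the line through `x` and `y`, and compare its derivative at `0` with the
  -- slope of the chord over `[0, 1]`.
  have hc : ConvexOn ℝ Set.univ (f ∘ AffineMap.lineMap (k := ℝ) x y) := by
    simpa using hconv.comp_affineMap (AffineMap.lineMap (k := ℝ) x y)
  have hg : HasFDerivAt f (InnerProductSpace.toDual ℝ E (gradient f x))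
      (AffineMap.lineMap (k := ℝ) x y 0) := by
    simpa using (hf x).hasGradientAt.hasFDerivAt
  have hd : HasDerivAt (f ∘ AffineMap.lineMap (k := ℝ) x y) ⟪gradient f x, y - x⟫ 0 := by
    simpa using hg.comp_hasDerivAt (0 : ℝ) AffineMap.hasDerivAt_lineMap
  have h := hc.le_slope_of_hasDerivAt (Set.mem_univ 0) (Set.mem_univ 1) one_pos hd
  simp only [slope_def_field, Function.comp_apply, AffineMap.lineMap_apply_one,
    AffineMap.lineMap_apply_zero, sub_zero, div_one] at h
  linarith

/-- One gradient step decreases a smooth convex function by the squared gradient norms at both the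
starting point and the end point, each divided by `2L`. -/
lemma gradient_step_decrease {E : Type*} [NormedAddCommGroup E] [InnerProductSpace ℝ E]
    [CompleteSpace E] {f : E → ℝ} (hconv : ConvexOn ℝ Set.univ f) (hf : Differentiable ℝ f)
    {L : ℝ} (hL : 0 < L)
    (hsmooth : ∀ x y, f y ≤ f x + ⟪gradient f x, y - x⟫ + L / 2 * ‖y - x‖ ^ 2)
    {x y : E} (hy : y = x - (1 / L) • gradient f x) :
    f y + (‖gradient f x‖ ^ 2 + ‖gradient f y‖ ^ 2) / (2 * L) ≤ f x := by
  have h1 := convex_tangent_le hconv hf y (y + (1 / L) • gradient f y)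
  have h2 := hsmooth x (y + (1 / L) • gradient f y)
  have e1 : y + (1 / L) • gradient f y - y = (1 / L) • gradient f y := by abel
  have e2 : y + (1 / L) • gradient f y - x = (1 / L) • (gradient f y - gradient f x) := by
    rw [smul_sub, sub_eq_add_neg _ x]
    nth_rewrite 1 [hy]
    abel
  rw [e1, inner_smul_right, real_inner_self_eq_norm_sq] at h1
  rw [e2, inner_smul_right, inner_sub_right, real_inner_self_eq_norm_sq, norm_smul, mul_pow,
    norm_sub_sq_real, Real.norm_eq_abs, sq_abs, real_inner_comm] at h2
  have h3 := h1.trans h2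
  field_simp at h3 ⊢
  linarith

theorem gradient_descent_improved_linear_rate {d : ℕ}
    (f : EuclideanSpace ℝ (Fin d) → ℝ)
    (hconv : ConvexOn ℝ Set.univ f) (hf : Differentiable ℝ f)
    {L : ℝ} (hL : 0 < L)
    (hsmooth : ∀ x y, f y ≤ f x + ⟪gradient f x, y - x⟫ + L / 2 * ‖y - x‖ ^ 2)
    (z : EuclideanSpace ℝ (Fin d)) (hz : ∀ x, f z ≤ f x)
    {ν : ℝ} (hν : 0 < ν)
    (hPL : ∀ x, ν * (f x - f z) ≤ 1 / 2 * ‖gradient f x‖ ^ 2)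
    (x : ℕ → EuclideanSpace ℝ (Fin d))
    (hx : ∀ k, x (k + 1) = x k - (1 / L) • gradient f (x k)) :
    ∀ k, f (x (k + 1)) - f z ≤ (L - ν) / (L + ν) * (f (x k) - f z) := by
  intro k
  have h := gradient_step_decrease hconv hf hL hsmooth (hx k)
  have p0 := hPL (x k)
  have p1 := hPL (x (k + 1))
  rw [div_mul_eq_mul_div, le_div_iff₀ (by positivity)]
  rw [← le_sub_iff_add_le', div_le_iff₀ (by positivity)] at h
  linarith
end
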